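/- Let R be a ring possessing a non-finitely-generated small right ideal I (e.g., R an infinite direct product of rings). Then M = R/I is a finitely generated right R-module such that Ext¹_R(M, −) commutes with direct sums but does not commute with direct limits. -/

import Mathlib

open CategoryTheory CategoryTheory.Limits Opposite

noncomputable section

/-- The category of right `R`-modules. -/
abbrev RMod (R : Type) [Ring R] := ModuleCat.{0} Rᵐᵒᵖ

/-- `R` as a right module over itself. -/
abbrev regR (R : Type) [Ring R] : RMod R := ModuleCat.of Rᵐᵒᵖ R

/-- The covariant functor `Ext¹_R(M, -)` (more generally `Extⁿ_R(M, -)`). -/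
abbrev extFun (R : Type) [Ring R] (n : ℕ) (M : RMod R) : RMod R ⥤ ModuleCat ℤ :=
  (Ext ℤ (RMod R) n).obj (op M)

/-- `Ext¹_R(M,-)` commutes with direct limits (direct systems over directed sets). -/
def CommutesWithDirectLimits (R : Type) [Ring R] (M : RMod R) : Prop :=
  ∀ (J : Type) [Preorder J] [IsDirected J (· ≤ ·)] [Nonempty J],
    PreservesColimitsOfShape J (extFun R 1 M)

/-- `Ext¹_R(M,-)` commutes with direct sums. -/
def CommutesWithDirectSums (R : Type) [Ring R] (M : RMod R) : Prop :=
  ∀ (ι : Type), PreservesColimitsOfShape (Discrete ι) (extFun R 1 M)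

/-- `Extⁿ_R(M,-)` commutes with direct sums of copies of `R`: the canonical map
`Extⁿ_R(M,R)^{(ι)} → Extⁿ_R(M,R^{(ι)})` is an isomorphism for every index set `ι`. -/
def CommutesWithSumsOfR (R : Type) [Ring R] (n : ℕ) (M : RMod R) : Prop :=
  ∀ (ι : Type), IsIso (Sigma.desc
    (fun i : ι => (extFun R n M).map (Sigma.ι (fun _ : ι => regR R) i)))

/-- A module `K` is small iff `Hom_R(K,-)` commutes with direct sums. -/
def IsSmallModule (R : Type) [Ring R] (K : RMod R) : Prop :=
  ∀ (ι : Type), PreservesColimitsOfShape (Discrete ι) (preadditiveCoyoneda.obj (op K))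

/-- `M` has a short exact sequence `0 → K → P → M → 0` with `P` projective and `K`
satisfying the property `Q` (e.g. `M` is fp-Ω¹, fg-Ω¹ or small-Ω¹). -/
def IsOmega1 (R : Type) [Ring R] (Q : RMod R → Prop) (M : RMod R) : Prop :=
  ∃ (K P : RMod R) (i : K ⟶ P) (p : P ⟶ M) (w : i ≫ p = 0),
    Mono i ∧ Epi p ∧ (ShortComplex.mk i p w).Exact ∧ Projective P ∧ Q K

/-- `M` has projective dimension at most 1. -/
def HasProjDimLE1 (R : Type) [Ring R] (M : RMod R) : Prop :=
  ∃ (P₁ P₀ : RMod R) (f : P₁ ⟶ P₀) (p : P₀ ⟶ M) (w : f ≫ p = 0),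
    Projective P₁ ∧ Projective P₀ ∧ Mono f ∧ Epi p ∧ (ShortComplex.mk f p w).Exact

/-- `M` is `FP₂`: it admits a projective resolution which is finitely generated in
dimensions `0`, `1` and `2`. -/
def IsFP2 (R : Type) [Ring R] (M : RMod R) : Prop :=
  ∃ (P₂ P₁ P₀ : RMod R) (d₂ : P₂ ⟶ P₁) (d₁ : P₁ ⟶ P₀) (p : P₀ ⟶ M)
    (w₂ : d₂ ≫ d₁ = 0) (w₁ : d₁ ≫ p = 0),
    Projective P₂ ∧ Projective P₁ ∧ Projective P₀ ∧
    Module.Finite Rᵐᵒᵖ P₂ ∧ Module.Finite Rᵐᵒᵖ P₁ ∧ Module.Finite Rᵐᵒᵖ P₀ ∧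
    Epi p ∧ (ShortComplex.mk d₂ d₁ w₂).Exact ∧ (ShortComplex.mk d₁ p w₁).Exact

/-- `M` has injective dimension at most `n`, i.e. `Ext^k(-,M)` vanishes for `k > n`. -/
def HasInjDimLE (R : Type) [Ring R] (n : ℕ) (M : RMod R) : Prop :=
  ∀ (k : ℕ), n < k → ∀ (N : RMod R), IsZero (((Ext ℤ (RMod R) k).obj (op N)).obj M)

/-! Let `0 → K → P → M → 0` be exact with `P` projective. Then `Ext¹(M, -)` is the pointwise
cokernel of `Hom(P, -) → Hom(K, -)`, hence preserves every colimit that both `Hom` functors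
preserve; for `P = R` and `K = I` small this applies to direct sums. Conversely, the quotients
`K ⧸ N` by finitely generated submodules form a directed system with zero colimit. If `Ext¹(M, -)`
preserves that colimit, the class of the pushout of the sequence along some `K → K ⧸ N` vanishes,
that is, `K → K ⧸ N` extends to a map `P → K ⧸ N`, necessarily surjective. When `P` is finitely
generated, so are `K ⧸ N` and `K`. -/

section Splicing

variable {C : Type*} [Category* C] [Abelian C]

/-- The augmentation `Q₀ ⟶ Z` of a projective resolution of `Z`; unlike `Q.π.f 0`, its target is
`Z` itself rather than a term of a single complex. -/
def resolutionAugmentation {Z : C} (Q : ProjectiveResolution Z) : Q.complex.X 0 ⟶ Z := Q.π.f 0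

instance epi_resolutionAugmentation {Z : C} (Q : ProjectiveResolution Z) :
    Epi (resolutionAugmentation Q) :=
  inferInstanceAs (Epi (Q.π.f 0))

lemma d_comp_resolutionAugmentation {Z : C} (Q : ProjectiveResolution Z) :
    Q.complex.d 1 0 ≫ resolutionAugmentation Q = 0 :=
  Q.complex_d_comp_π_f_zero

lemma exact_resolutionAugmentation {Z : C} (Q : ProjectiveResolution Z) :
    (ShortComplex.mk _ _ (d_comp_resolutionAugmentation Q)).Exact :=
  Q.exact₀

variable {S : ShortComplex C}

/-- The complex `⋯ ⟶ Q₁ ⟶ Q₀ ⟶ S.X₂` whose last differential is the composite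
`Q₀ ⟶ S.X₁ ⟶ S.X₂`, for a projective resolution `Q` of `S.X₁`. -/
def splicedComplex (Q : ProjectiveResolution S.X₁) : ChainComplex C ℕ :=
  Q.complex.augment (resolutionAugmentation Q ≫ S.f) (by
    rw [reassoc_of% d_comp_resolutionAugmentation Q, zero_comp])

lemma exactAt_succ_splicedComplex (Q : ProjectiveResolution S.X₁) [Mono S.f] (n : ℕ) :
    (splicedComplex Q).ExactAt (n + 1) := by
  rw [HomologicalComplex.exactAt_iff' _ (n + 1 + 1) (n + 1) n (by simp) (by simp)]
  match n with
  | 0 =>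
    let φ : ShortComplex.mk _ _ (d_comp_resolutionAugmentation Q) ⟶
        (splicedComplex Q).sc' 2 1 0 :=
      { τ₁ := 𝟙 (Q.complex.X 1)
        τ₂ := 𝟙 (Q.complex.X 0)
        τ₃ := S.f
        comm₁₂ := (Category.id_comp _).trans (Category.comp_id _).symm
        comm₂₃ := Category.id_comp _ }
    have : Epi φ.τ₁ := inferInstanceAs (Epi (𝟙 (Q.complex.X 1)))
    have : IsIso φ.τ₂ := inferInstanceAs (IsIso (𝟙 (Q.complex.X 0)))
    have : Mono φ.τ₃ := inferInstanceAs (Mono S.f)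
    exact (ShortComplex.exact_iff_of_epi_of_isIso_of_mono φ).1 (exact_resolutionAugmentation Q)
  | n + 1 => exact Q.exact_succ n

lemma resolutionAugmentation_comp_f_comp_g (Q : ProjectiveResolution S.X₁) :
    (resolutionAugmentation Q ≫ S.f) ≫ S.g = 0 := by
  rw [Category.assoc, S.zero, comp_zero]

lemma exact_resolutionAugmentation_comp_f (Q : ProjectiveResolution S.X₁) (hS : S.Exact) :
    (ShortComplex.mk _ _ (resolutionAugmentation_comp_f_comp_g Q)).Exact := by
  let φ : ShortComplex.mk _ _ (resolutionAugmentation_comp_f_comp_g Q) ⟶ S :=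
    { τ₁ := resolutionAugmentation Q
      τ₂ := 𝟙 S.X₂
      τ₃ := 𝟙 S.X₃ }
  exact (ShortComplex.exact_iff_of_epi_of_isIso_of_mono φ).2 hS

/-- The projective resolution `⋯ ⟶ Q₁ ⟶ Q₀ ⟶ S.X₂` of `S.X₃` obtained by splicing a projective
resolution `Q` of `S.X₁` with a short exact sequence `S` whose middle term is projective. -/
def splicedResolution (hS : S.ShortExact) [Projective S.X₂] (Q : ProjectiveResolution S.X₁) :
    ProjectiveResolution S.X₃ where
  complex := splicedComplex Q
  projective
    | 0 => inferInstanceAs (Projective S.X₂)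
    | n + 1 => Q.projective n
  π := (ChainComplex.toSingle₀Equiv _ _).symm ⟨S.g, resolutionAugmentation_comp_f_comp_g Q⟩
  quasiIso := ⟨fun n => by
    have := hS.mono_f
    cases n
    · rw [ChainComplex.quasiIsoAt₀_iff, ShortComplex.quasiIso_iff_of_zeros']
      · refine (ShortComplex.exact_and_epi_g_iff_of_iso
          (S₁ := ShortComplex.mk _ _ (resolutionAugmentation_comp_f_comp_g Q)) ?_).1
          ⟨exact_resolutionAugmentation_comp_f Q hS.exact, hS.epi_g⟩
        refine ShortComplex.isoMk (Iso.refl _) (Iso.refl _) (Iso.refl _) ?_ ?_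
        · exact (Category.id_comp _).trans (Category.comp_id _).symm
        · refine (Category.id_comp _).trans (Eq.trans ?_ (Category.comp_id _).symm)
          exact ChainComplex.toSingle₀Equiv_symm_apply_f_zero _ _
      all_goals rfl
    · rw [quasiIsoAt_iff_exactAt']
      · exact exactAt_succ_splicedComplex Q _
      · exact ChainComplex.exactAt_succ_single_obj _ _⟩

end Splicing

section HomologyAsKernel

variable {D ι : Type*} [Category* D] [Preadditive D] {c : ComplexShape ι}
  {X Y : HomologicalComplex D c} {i j k : ι} [X.HasHomology j] [Y.HasHomology j] {A B : D}

/-- The map `Hⱼ(X) ⟶ A` induced by a morphism `p : Xⱼ ⟶ A` killing boundaries. -/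
def homologyDesc (p : X.X j ⟶ A) (hi : c.prev j = i) (w : X.d i j ≫ p = 0) : X.homology j ⟶ A :=
  X.homologyι j ≫ X.descOpcycles p i hi w

lemma homologyMap_comp_homologyDesc (φ : X ⟶ Y) {p : X.X j ⟶ A} {q : Y.X j ⟶ B} {a : A ⟶ B}
    (comm : φ.f j ≫ q = p ≫ a) (hi : c.prev j = i) (w : X.d i j ≫ p = 0)
    (w' : Y.d i j ≫ q = 0) :
    HomologicalComplex.homologyMap φ j ≫ homologyDesc q hi w' = homologyDesc p hi w ≫ a := by
  have h : HomologicalComplex.opcyclesMap φ j ≫ Y.descOpcycles q i hi w' =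
      X.descOpcycles p i hi w ≫ a := by
    simp only [← cancel_epi (X.pOpcycles j), HomologicalComplex.p_opcyclesMap_assoc,
      HomologicalComplex.p_descOpcycles, HomologicalComplex.p_descOpcycles_assoc, comm]
  rw [homologyDesc, homologyDesc, HomologicalComplex.homologyι_naturality_assoc, h,
    Category.assoc]

lemma descOpcycles_comp_of_fac {p : X.X j ⟶ A} {m : A ⟶ X.X k} (fac : p ≫ m = X.d j k)
    (hi : c.prev j = i) (w : X.d i j ≫ p = 0) :
    X.descOpcycles p i hi w ≫ m = X.fromOpcycles j k := by
  rw [← cancel_epi (X.pOpcycles j), HomologicalComplex.p_descOpcycles_assoc,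
    HomologicalComplex.p_fromOpcycles, fac]

lemma homologyDesc_comp_of_fac {p : X.X j ⟶ A} {m : A ⟶ X.X k} (fac : p ≫ m = X.d j k)
    (hi : c.prev j = i) (w : X.d i j ≫ p = 0) : homologyDesc p hi w ≫ m = 0 := by
  rw [homologyDesc, Category.assoc, descOpcycles_comp_of_fac fac,
    HomologicalComplex.homologyι_comp_fromOpcycles]

lemma isIso_descOpcycles_of_isColimit [X.HasHomology i] {p : X.X j ⟶ A} (hi : c.prev j = i)
    {w : X.d i j ≫ p = 0} (hp : IsColimit (CokernelCofork.ofπ p w)) :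
    IsIso (X.descOpcycles p i hi w) := by
  have h : X.descOpcycles p i hi w =
      ((X.opcyclesIsCokernel i j hi).coconePointUniqueUpToIso hp).hom := by
    rw [← cancel_epi (X.pOpcycles j), HomologicalComplex.p_descOpcycles]
    exact ((X.opcyclesIsCokernel i j hi).comp_coconePointUniqueUpToIso_hom hp
      WalkingParallelPair.one).symm
  rw [h]
  infer_instance

/-- If a differential `Xⱼ ⟶ Xₖ` factors as `p ≫ m` with `p` a cokernel of the preceding
differential, then `Hⱼ(X)` is the kernel of `m`. -/
def isKernelHomologyDesc [X.HasHomology i] {p : X.X j ⟶ A} {m : A ⟶ X.X k} (fac : p ≫ m = X.d j k)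
    (hi : c.prev j = i) (hk : c.next j = k) {w : X.d i j ≫ p = 0}
    (hp : IsColimit (CokernelCofork.ofπ p w)) :
    IsLimit (KernelFork.ofι _ (homologyDesc_comp_of_fac fac hi w)) :=
  have := isIso_descOpcycles_of_isColimit hi hp
  KernelFork.isLimitOfIsLimitOfIff (X.homologyIsKernel j k hk) m (asIso (X.descOpcycles p i hi w))
    fun _ φ => by rw [asIso_hom, descOpcycles_comp_of_fac fac]

end HomologyAsKernel

section DimensionShift

variable {C D : Type*} [Category* C] [Abelian C] [Category* D] [Abelian D]
  {Z K : C} (P : ProjectiveResolution Z) {ε : P.complex.X 1 ⟶ K} {m : K ⟶ P.complex.X 0}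

lemma map_d_comp_map_eq_zero (w : P.complex.d 2 1 ≫ ε = 0) (F : C ⥤ D) [F.Additive] :
    ((F.mapHomologicalComplex _).obj P.complex).d 2 1 ≫ F.map ε = 0 :=
  (F.map_comp _ _).symm.trans ((congrArg F.map w).trans (F.map_zero _ _))

variable [HasProjectiveResolutions C]

/-- The first left derived functor, computed as the homology in degree one. -/
def leftDerivedOneIso (F : C ⥤ D) [F.Additive] :
    (F.leftDerived 1).obj Z ≅ ((F.mapHomologicalComplex _).obj P.complex).homology 1 :=
  P.isoLeftDerivedObj F 1

/-- The map from the first left derived functor at `Z` to the value at a first syzygy `K` of `Z`,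
presented by a morphism `ε : P₁ ⟶ K` killing the image of `P₂`. -/
def leftDerivedOneToSyzygy (w : P.complex.d 2 1 ≫ ε = 0) (F : C ⥤ D) [F.Additive] :
    (F.leftDerived 1).obj Z ⟶ F.obj K :=
  (leftDerivedOneIso P F).hom ≫
    homologyDesc (F.map ε) (by simp) (map_d_comp_map_eq_zero P w F)

lemma leftDerivedOneToSyzygy_naturality (w : P.complex.d 2 1 ≫ ε = 0) {F G : C ⥤ D}
    [F.Additive] [G.Additive] (α : F ⟶ G) :
    (NatTrans.leftDerived α 1).app Z ≫ leftDerivedOneToSyzygy P w G =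
      leftDerivedOneToSyzygy P w F ≫ α.app K := by
  have h := homologyMap_comp_homologyDesc ((NatTrans.mapHomologicalComplex α _).app P.complex)
    (α.naturality ε).symm (by simp) (map_d_comp_map_eq_zero P w F) (map_d_comp_map_eq_zero P w G)
  have e : (NatTrans.leftDerived α 1).app Z ≫ (leftDerivedOneIso P G).hom =
      (leftDerivedOneIso P F).hom ≫ HomologicalComplex.homologyMap
        ((NatTrans.mapHomologicalComplex α _).app P.complex) 1 := by
    rw [P.leftDerived_app_eq α 1, ← Iso.eq_comp_inv]
    exact (Category.assoc _ _ _).symm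
  simp only [leftDerivedOneToSyzygy, Category.assoc, reassoc_of% e]
  rw [h]

lemma leftDerivedOneToSyzygy_comp_map (w : P.complex.d 2 1 ≫ ε = 0)
    (fac : ε ≫ m = P.complex.d 1 0) (F : C ⥤ D) [F.Additive] :
    leftDerivedOneToSyzygy P w F ≫ F.map m = 0 := by
  have h := homologyDesc_comp_of_fac (X := (F.mapHomologicalComplex _).obj P.complex)
    ((F.map_comp ε m).symm.trans (congrArg F.map fac)) (by simp) (map_d_comp_map_eq_zero P w F)
  rw [leftDerivedOneToSyzygy, Category.assoc]
  exact (congrArg _ h).trans comp_zero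

/-- Dimension shifting: for a right exact functor `F` and a factorisation `P₁ ⟶ K ⟶ P₀` of the
first differential of `P` through the cokernel `K` of `P₂ ⟶ P₁`, the first left derived functor of
`F` at `Z` is the kernel of `F(K) ⟶ F(P₀)`. -/
def isKernelLeftDerivedOneToSyzygy {w : P.complex.d 2 1 ≫ ε = 0}
    (hε : IsColimit (CokernelCofork.ofπ ε w)) (fac : ε ≫ m = P.complex.d 1 0) (F : C ⥤ D)
    [F.Additive] [PreservesFiniteColimits F] :
    IsLimit (KernelFork.ofι _ (leftDerivedOneToSyzygy_comp_map P w fac F)) :=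
  IsLimit.ofIsoLimit
    (isKernelHomologyDesc (X := (F.mapHomologicalComplex _).obj P.complex)
      ((F.map_comp ε m).symm.trans (congrArg F.map fac)) (by simp) (by simp)
      (CokernelCofork.mapIsColimit _ hε F))
    (Fork.ext (leftDerivedOneIso P F).symm (Iso.inv_hom_id_assoc _ _))

end DimensionShift

section ExtOne

variable (R : Type*) [Ring R] {C : Type*} [Category* C] [Abelian C] [Linear R C]

instance preservesLimits_linearYoneda_obj (Y : C) : PreservesLimits ((linearYoneda R C).obj Y) :=
  have : PreservesLimits ((linearYoneda R C).obj Y ⋙ forget (ModuleCat R)) :=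
    inferInstanceAs (PreservesLimits (yoneda.obj Y))
  preservesLimits_of_reflects_of_preserves _ (forget (ModuleCat R))

instance preservesFiniteColimits_rightOp_linearYoneda_obj (Y : C) :
    PreservesFiniteColimits ((linearYoneda R C).obj Y).rightOp :=
  have : PreservesFiniteLimits ((linearYoneda R C).obj Y) := inferInstance
  preservesFiniteColimits_rightOp _

variable [EnoughProjectives C] {S : ShortComplex C} (hS : S.ShortExact) [Projective S.X₂]

/-- The connecting map `Hom(S.X₁, Y) ⟶ Ext¹(S.X₃, Y)`, natural in `Y`, attached to a short exact
sequence `S` with projective middle term. It is read off from `leftDerivedOneToSyzygy` for the right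
exact functors `Hom(-, Y)` with values in the opposite category, in terms of which `Ext` is
defined. -/
def extConnecting : (linearCoyoneda R C).obj (op S.X₁) ⟶ (Ext R C 1).obj (op S.X₃) where
  app Y := (leftDerivedOneToSyzygy (splicedResolution hS (projectiveResolution S.X₁))
    (d_comp_resolutionAugmentation _) ((linearYoneda R C).obj Y).rightOp).unop
  naturality _ _ f := (congrArg Quiver.Hom.unop (leftDerivedOneToSyzygy_naturality
    (splicedResolution hS (projectiveResolution S.X₁)) (d_comp_resolutionAugmentation _)
    (NatTrans.rightOp ((linearYoneda R C).map f)))).symm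

lemma map_f_comp_extConnecting_app (Y : C) :
    ((linearCoyoneda R C).map S.f.op).app Y ≫ (extConnecting R hS).app Y = 0 :=
  congrArg Quiver.Hom.unop (leftDerivedOneToSyzygy_comp_map
    (splicedResolution hS (projectiveResolution S.X₁)) (d_comp_resolutionAugmentation _) (m := S.f)
    rfl ((linearYoneda R C).obj Y).rightOp)

/-- `Ext¹(S.X₃, Y)` is the cokernel of `Hom(S.X₂, Y) ⟶ Hom(S.X₁, Y)`. -/
def isCokernelExtConnectingApp (Y : C) :
    IsColimit (CokernelCofork.ofπ _ (map_f_comp_extConnecting_app R hS Y)) :=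
  KernelFork.IsLimit.ofιUnop _ _ (isKernelLeftDerivedOneToSyzygy
    (splicedResolution hS (projectiveResolution S.X₁)) (m := S.f)
    (exact_resolutionAugmentation _).gIsCokernel rfl ((linearYoneda R C).obj Y).rightOp)

/-- The class in `Ext¹(S.X₃, Y)` of the pushout of `S` along a morphism `S.X₁ ⟶ Y`. -/
def pushoutExtClass (Y : C) : (S.X₁ ⟶ Y) →ₗ[R] ((Ext R C 1).obj (op S.X₃)).obj Y :=
  ((extConnecting R hS).app Y).hom

lemma map_pushoutExtClass {Y Y' : C} (q : S.X₁ ⟶ Y) (f : Y ⟶ Y') :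
    (((Ext R C 1).obj (op S.X₃)).map f).hom (pushoutExtClass R hS Y q) =
      pushoutExtClass R hS Y' (q ≫ f) :=
  (congrArg (fun g => g.hom q) ((extConnecting R hS).naturality f)).symm

lemma exists_f_comp_eq_of_pushoutExtClass_eq_zero {Y : C} (q : S.X₁ ⟶ Y)
    (hq : pushoutExtClass R hS Y q = 0) : ∃ p : S.X₂ ⟶ Y, S.f ≫ p = q :=
  (ShortComplex.moduleCat_exact_iff (ShortComplex.mk _ _ (map_f_comp_extConnecting_app R hS Y))).1
    (ShortComplex.exact_of_g_is_cokernel _ (isCokernelExtConnectingApp R hS Y)) q hq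

end ExtOne

section PointwiseCokernel

variable {J C D : Type*} [Category* J] [Category* C] [Category* D] [HasZeroMorphisms D]
  {A B E : C ⥤ D} (φ : A ⟶ B) (ψ : B ⟶ E) (w : ∀ Y, φ.app Y ≫ ψ.app Y = 0)

/-- If `E` is a pointwise cokernel of `φ : A ⟶ B`, then a colimit cocone preserved by `A` and `B` is
preserved by `E`. -/
def isColimitMapCoconeOfPointwiseCokernel
    (hψ : ∀ Y, IsColimit (CokernelCofork.ofπ (ψ.app Y) (w Y))) {K : J ⥤ C} {c : Cocone K}
    (hA : IsColimit (A.mapCocone c)) (hB : IsColimit (B.mapCocone c)) :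
    IsColimit (E.mapCocone c) :=
  have epi_ψ (Y : C) : Epi (ψ.app Y) := epi_of_isColimit_cofork (hψ Y)
  let leg (i : J) : K.obj i ⟶ c.pt := c.ι.app i
  let leg' (s : Cocone (K ⋙ E)) (i : J) : E.obj (K.obj i) ⟶ s.pt := s.ι.app i
  let descB (s : Cocone (K ⋙ E)) : B.obj c.pt ⟶ s.pt :=
    hB.desc ((Cocone.precompose (Functor.whiskerLeft K ψ)).obj s)
  have map_descB (s : Cocone (K ⋙ E)) (i : J) :
      B.map (leg i) ≫ descB s = ψ.app (K.obj i) ≫ leg' s i :=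
    hB.fac ((Cocone.precompose (Functor.whiskerLeft K ψ)).obj s) i
  have φ_descB (s : Cocone (K ⋙ E)) : φ.app c.pt ≫ descB s = 0 := hA.hom_ext fun i =>
    have h : A.map (leg i) ≫ φ.app c.pt ≫ descB s = 0 := by
      rw [φ.naturality_assoc, map_descB, reassoc_of% (w (K.obj i)), zero_comp]
    h.trans comp_zero.symm
  let descE (s : Cocone (K ⋙ E)) : E.obj c.pt ⟶ s.pt :=
    (hψ c.pt).desc (CokernelCofork.ofπ _ (φ_descB s))
  have ψ_descE (s : Cocone (K ⋙ E)) : ψ.app c.pt ≫ descE s = descB s :=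
    (hψ c.pt).fac (CokernelCofork.ofπ _ (φ_descB s)) WalkingParallelPair.one
  have map_descE (s : Cocone (K ⋙ E)) (i : J) : E.map (leg i) ≫ descE s = leg' s i := by
    rw [← cancel_epi (ψ.app (K.obj i)), ← ψ.naturality_assoc, ψ_descE, map_descB]
  { desc := descE
    fac := map_descE
    uniq s m hm := (cancel_epi (ψ.app c.pt)).1 <| hB.hom_ext fun i =>
      have h : B.map (leg i) ≫ ψ.app c.pt ≫ m = B.map (leg i) ≫ ψ.app c.pt ≫ descE s := by
        rw [ψ.naturality_assoc, ψ.naturality_assoc, map_descE]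
        exact congrArg _ (hm i)
      h }

lemma preservesColimitsOfShape_of_pointwise_cokernel
    (hψ : ∀ Y, IsColimit (CokernelCofork.ofπ (ψ.app Y) (w Y))) [PreservesColimitsOfShape J A]
    [PreservesColimitsOfShape J B] : PreservesColimitsOfShape J E where
  preservesColimit :=
    { preserves hc := ⟨isColimitMapCoconeOfPointwiseCokernel φ ψ w hψ
        (isColimitOfPreserves A hc) (isColimitOfPreserves B hc)⟩ }

end PointwiseCokernel

section ExtPreservesColimits

variable {J C : Type*} [Category* J] [Category* C]

lemma preservesColimitsOfShape_linearCoyoneda_int [Preadditive C] [Linear ℤ C] (K : C)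
    [PreservesColimitsOfShape J (preadditiveCoyoneda.obj (op K))] :
    PreservesColimitsOfShape J ((linearCoyoneda ℤ C).obj (op K)) :=
  have : PreservesColimitsOfShape J
      ((linearCoyoneda ℤ C).obj (op K) ⋙ forget₂ (ModuleCat ℤ) AddCommGrpCat) :=
    inferInstanceAs (PreservesColimitsOfShape J (preadditiveCoyoneda.obj (op K)))
  preservesColimitsOfShape_of_reflects_of_preserves _ (forget₂ (ModuleCat ℤ) AddCommGrpCat)

variable [Abelian C] [Linear ℤ C] [EnoughProjectives C] {S : ShortComplex C}

theorem preservesColimitsOfShape_ext_one (hS : S.ShortExact) [Projective S.X₂]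
    [PreservesColimitsOfShape J (preadditiveCoyoneda.obj (op S.X₁))]
    [PreservesColimitsOfShape J (preadditiveCoyoneda.obj (op S.X₂))] :
    PreservesColimitsOfShape J ((Ext ℤ C 1).obj (op S.X₃)) :=
  have := preservesColimitsOfShape_linearCoyoneda_int (J := J) S.X₁
  have := preservesColimitsOfShape_linearCoyoneda_int (J := J) S.X₂
  preservesColimitsOfShape_of_pointwise_cokernel ((linearCoyoneda ℤ C).map S.f.op)
    (extConnecting ℤ hS) (map_f_comp_extConnecting_app ℤ hS) (isCokernelExtConnectingApp ℤ hS)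

end ExtPreservesColimits

section QuotientsByFGSubmodules

universe u

variable {A : Type u} [Ring A]

/-- The directed system of the quotients of `M` by its finitely generated submodules. -/
def fgQuotients (M : ModuleCat.{u} A) : {N : Submodule A M // N.FG} ⥤ ModuleCat.{u} A where
  obj N := ModuleCat.of A (M ⧸ N.1)
  map f := ModuleCat.ofHom (Submodule.factor (leOfHom f))
  map_id _ := ModuleCat.hom_ext (Submodule.linearMap_qext _ rfl)
  map_comp _ _ := ModuleCat.hom_ext (Submodule.linearMap_qext _ rfl)

lemma preservesColimitsOfShape_forget_int (J : Type u) [SmallCategory J] [IsFiltered J] :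
    PreservesColimitsOfShape J (forget (ModuleCat.{u} ℤ)) :=
  inferInstanceAs (PreservesColimitsOfShape J
    (forget₂ (ModuleCat.{u} ℤ) AddCommGrpCat ⋙ forget AddCommGrpCat))

variable {M : ModuleCat.{u} A}

/-- The projection of `M` onto its quotient by a finitely generated submodule. -/
def toFGQuotient (N : {N : Submodule A M // N.FG}) : M ⟶ (fgQuotients M).obj N :=
  ModuleCat.ofHom N.1.mkQ

lemma toFGQuotient_comp_map {N N' : {N : Submodule A M // N.FG}} (f : N ⟶ N') :
    toFGQuotient N ≫ (fgQuotients M).map f = toFGQuotient N' := rfl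

lemma toFGQuotient_hom_surjective (N : {N : Submodule A M // N.FG}) :
    Function.Surjective (toFGQuotient N).hom := N.1.mkQ_surjective

lemma toFGQuotient_comp_cocone_ι (s : Cocone (fgQuotients M))
    (N : {N : Submodule A M // N.FG}) : toFGQuotient N ≫ s.ι.app N = 0 := by
  ext x
  let N' : {N : Submodule A M // N.FG} :=
    ⟨N.1 ⊔ Submodule.span A {x}, N.2.sup (Submodule.fg_span_singleton x)⟩
  have hx : toFGQuotient N' x = 0 := (Submodule.Quotient.mk_eq_zero N'.1).2
    (le_sup_right (a := N.1) (Submodule.mem_span_singleton_self x))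
  have hN : N ≤ N' := le_sup_left (a := N.1)
  rw [← s.w (homOfLE hN), ← Category.assoc, toFGQuotient_comp_map]
  exact (congrArg (s.ι.app N') hx).trans (map_zero _)

variable {S : ShortComplex (ModuleCat.{u} A)} [Projective S.X₂]

lemma exists_pushoutExtClass_toFGQuotient_eq_zero (hS : S.ShortExact)
    [PreservesColimitsOfShape {N : Submodule A S.X₁ // N.FG}
      ((Ext ℤ (ModuleCat.{u} A) 1).obj (op S.X₃))] :
    ∃ N, pushoutExtClass ℤ hS _ (toFGQuotient (M := S.X₁) N) = 0 := by
  let F := (Ext ℤ (ModuleCat.{u} A) 1).obj (op S.X₃)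
  let c := colimit.cocone (fgQuotients S.X₁)
  obtain ⟨N₀⟩ : Nonempty {N : Submodule A S.X₁ // N.FG} := inferInstance
  let x := pushoutExtClass ℤ hS _ (toFGQuotient (M := S.X₁) N₀)
  have hx : (F.map (c.ι.app N₀)).hom x = 0 :=
    (map_pushoutExtClass ℤ hS _ _).trans
      ((congrArg _ (toFGQuotient_comp_cocone_ι c N₀)).trans (map_zero _))
  have := preservesColimitsOfShape_forget_int {N : Submodule A S.X₁ // N.FG}
  obtain ⟨N, f, g, h⟩ := Concrete.isColimit_exists_of_rep_eq (fgQuotients S.X₁ ⋙ F)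
    (isColimitOfPreserves F (colimit.isColimit _)) x 0
    (hx.trans (map_zero (F.map (c.ι.app N₀)).hom).symm)
  refine ⟨N, ?_⟩
  rw [← toFGQuotient_comp_map f, ← map_pushoutExtClass]
  exact h.trans (map_zero (F.map ((fgQuotients S.X₁).map g)).hom)

theorem finite_X₁_of_preservesColimitsOfShape_ext_one (hS : S.ShortExact) [Module.Finite A S.X₂]
    [PreservesColimitsOfShape {N : Submodule A S.X₁ // N.FG}
      ((Ext ℤ (ModuleCat.{u} A) 1).obj (op S.X₃))] :
    Module.Finite A S.X₁ := by
  obtain ⟨N, hN⟩ := exists_pushoutExtClass_toFGQuotient_eq_zero hS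
  obtain ⟨p, hp⟩ := exists_f_comp_eq_of_pushoutExtClass_eq_zero ℤ hS _ hN
  have p_surjective : Function.Surjective p.hom := by
    refine Function.Surjective.of_comp (g := S.f.hom) ?_
    rw [← LinearMap.coe_comp, ← ModuleCat.hom_comp, hp]
    exact toFGQuotient_hom_surjective N
  have : Module.Finite A (S.X₁ ⧸ N.1) := Module.Finite.of_surjective p.hom p_surjective
  have : Module.Finite A N.1 := Module.Finite.iff_fg.2 N.2
  exact Module.Finite.of_submodule_quotient N.1

end QuotientsByFGSubmodules

section RegularModule

universe u

variable {A : Type u} [Ring A]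

/-- Morphisms out of the regular module are elements. -/
def preadditiveCoyonedaSelfIso :
    preadditiveCoyoneda.obj (op (ModuleCat.of A A)) ≅ forget₂ (ModuleCat.{u} A) AddCommGrpCat :=
  NatIso.ofComponents (fun M => AddEquiv.toAddCommGrpIso
    (X := (preadditiveCoyoneda.obj (op (ModuleCat.of A A))).obj M)
    (Y := (forget₂ (ModuleCat.{u} A) AddCommGrpCat).obj M)
    (ModuleCat.homAddEquiv.trans (LinearMap.ringLmapEquivSelf A ℕ M).toAddEquiv))
    (fun _ => rfl)

instance preservesColimitsOfShape_preadditiveCoyoneda_self (J : Type u) [Category.{u} J] :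
    PreservesColimitsOfShape J (preadditiveCoyoneda.obj (op (ModuleCat.of A A))) :=
  preservesColimitsOfShape_of_natIso preadditiveCoyonedaSelfIso.symm

variable {M : Type u} [AddCommGroup M] [Module A M] (N : Submodule A M)

/-- The short complex `0 → N → M → M ⧸ N → 0` attached to a submodule. -/
def submoduleShortComplex : ShortComplex (ModuleCat.{u} A) :=
  ShortComplex.mk (ModuleCat.ofHom N.subtype) (ModuleCat.ofHom N.mkQ) (by
    ext x
    exact (Submodule.Quotient.mk_eq_zero N).2 x.2)

lemma submoduleShortComplex_shortExact : (submoduleShortComplex N).ShortExact where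
  exact := (ShortComplex.moduleCat_exact_iff _).2 fun x hx =>
    ⟨⟨x, (Submodule.Quotient.mk_eq_zero N).1 hx⟩, rfl⟩
  mono_f := (ModuleCat.mono_iff_injective _).2 N.injective_subtype
  epi_g := (ModuleCat.epi_iff_surjective _).2 N.mkQ_surjective

end RegularModule

theorem quotient_by_small_nonfg_ideal (R : Type) [Ring R] (I : Ideal Rᵐᵒᵖ)
    (hsmall : IsSmallModule R (ModuleCat.of Rᵐᵒᵖ I)) (hnfg : ¬ I.FG) :
    Module.Finite Rᵐᵒᵖ (ModuleCat.of Rᵐᵒᵖ (Rᵐᵒᵖ ⧸ I)) ∧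
    CommutesWithDirectSums R (ModuleCat.of Rᵐᵒᵖ (Rᵐᵒᵖ ⧸ I)) ∧
    ¬ CommutesWithDirectLimits R (ModuleCat.of Rᵐᵒᵖ (Rᵐᵒᵖ ⧸ I)) := by
  let S := submoduleShortComplex I
  have hS : S.ShortExact := submoduleShortComplex_shortExact I
  have : Projective S.X₂ := inferInstanceAs (Projective (ModuleCat.of Rᵐᵒᵖ Rᵐᵒᵖ))
  have : Module.Finite Rᵐᵒᵖ S.X₂ := inferInstanceAs (Module.Finite Rᵐᵒᵖ Rᵐᵒᵖ)
  refine ⟨inferInstanceAs (Module.Finite Rᵐᵒᵖ (Rᵐᵒᵖ ⧸ I)), fun ι => ?_, fun h => hnfg ?_⟩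
  · have : PreservesColimitsOfShape (Discrete ι) (preadditiveCoyoneda.obj (op S.X₁)) := hsmall ι
    have : PreservesColimitsOfShape (Discrete ι) (preadditiveCoyoneda.obj (op S.X₂)) :=
      preservesColimitsOfShape_preadditiveCoyoneda_self (Discrete ι)
    exact preservesColimitsOfShape_ext_one hS
  · have : PreservesColimitsOfShape {N : Submodule Rᵐᵒᵖ S.X₁ // N.FG}
        ((Ext ℤ (ModuleCat.{0} Rᵐᵒᵖ) 1).obj (op S.X₃)) := h {N : Submodule Rᵐᵒᵖ I // N.FG}
    exact Module.Finite.iff_fg.1 (finite_X₁_of_preservesColimitsOfShape_ext_one hS)
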